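/- Let Λ ⊆ ℝ^{n} × ℝ^{m} with Λ ⊆ ℝ^{n} × R for some R ⊆ ℝ^{m}, let r ∈ ℝ^{m}, and let r* ∈ R be a minimizer of s ↦ ‖s − r‖ over R. Let f : ℝ^{n} × ℝ^{m} → ℝ^{n} satisfy: (x, v) ∈ Λ implies (f(x, v), v) ∈ Λ. Let Λ be convex, and let g : ℝ^{n} → ℝ^{m} satisfy: whenever S_v(Λ, x) = {s : (x, s) ∈ Λ} is nonempty, g(x) is the unique minimizer of s ↦ ‖s − r‖ over S_v(Λ, x). Define the closed-loop sequences v_k = g(x_k), x_{k+1} = f(x_k, v_k) with S_v(Λ, x_0) ≠ ∅. If x_k → x̄ as k → ∞ for some x̄ with (x̄, r*) ∈ interior(Λ), then there exists t ∈ ℕ such that v_k = r* for all k ≥ t. -/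

import Mathlib

/-- Abstract form of Theorem 4 (finite-time convergence of the auxiliary
reference). -/
theorem fg_finite_time_convergence
    {n m : ℕ}
    (Λ : Set (EuclideanSpace ℝ (Fin n) × EuclideanSpace ℝ (Fin m)))
    (R : Set (EuclideanSpace ℝ (Fin m)))
    (hΛR : Λ ⊆ {p | p.2 ∈ R})
    (r : EuclideanSpace ℝ (Fin m))
    (rstar : EuclideanSpace ℝ (Fin m)) (hrstar : rstar ∈ R)
    (hmin : ∀ s ∈ R, ‖rstar - r‖ ≤ ‖s - r‖)
    (f : EuclideanSpace ℝ (Fin n) → EuclideanSpace ℝ (Fin m) → EuclideanSpace ℝ (Fin n))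
    (hf : ∀ x v, (x, v) ∈ Λ → (f x v, v) ∈ Λ)
    (hΛ : Convex ℝ Λ)
    (g : EuclideanSpace ℝ (Fin n) → EuclideanSpace ℝ (Fin m))
    (hg : ∀ x : EuclideanSpace ℝ (Fin n), {s | (x, s) ∈ Λ}.Nonempty →
      (x, g x) ∈ Λ ∧ ∀ s, (x, s) ∈ Λ → s ≠ g x → ‖g x - r‖ < ‖s - r‖)
    (x : ℕ → EuclideanSpace ℝ (Fin n))
    (v : ℕ → EuclideanSpace ℝ (Fin m))
    (hv : ∀ k, v k = g (x k))
    (hx : ∀ k, x (k + 1) = f (x k) (v k))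
    (h0 : {s | (x 0, s) ∈ Λ}.Nonempty)
    (xbar : EuclideanSpace ℝ (Fin n))
    (hxbar : (xbar, rstar) ∈ interior Λ)
    (hlim : Filter.Tendsto x Filter.atTop (nhds xbar)) :
    ∃ t : ℕ, ∀ k ≥ t, v k = rstar := by
  have hT : Filter.Tendsto (fun k => (x k, rstar)) Filter.atTop (nhds (xbar, rstar)) :=
    hlim.prodMk_nhds tendsto_const_nhds
  have hE := hT.eventually (mem_interior_iff_mem_nhds.mp hxbar)
  obtain ⟨t, ht⟩ := Filter.eventually_atTop.mp hE
  refine ⟨t, fun k hk => ?_⟩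
  have hk' : (x k, rstar) ∈ Λ := ht k hk
  obtain ⟨hmem, huniq⟩ := hg (x k) ⟨rstar, hk'⟩
  rw [hv k]
  by_contra hne
  have h1 := huniq rstar hk' (fun h => hne h.symm)
  have h2 := hmin (g (x k)) (hΛR hmem)
  exact absurd h1 (not_lt.mpr h2)
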